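/- Let A ⊆ B be an aperiodic C*-inclusion with a supportive generalised expectation E : B → Ã ⊇ A, and set N_E := {b ∈ B : E((b c)*(b c)) = 0 for all c ∈ B}. Then: (1) N_E is the hidden ideal of the inclusion A ⊆ B, i.e., N_E is a closed two-sided ideal of B and every closed two-sided ideal J of B satisfies J ∩ A = {0} if and only if J ⊆ N_E; (2) B is simple if and only if N_E = {0} and A is B-minimal. -/

import Mathlib

/-- A square matrix over a C*-algebra is positive iff it is of the form `yᴴ * y`. -/
def MatrixIsPositive {B : Type*} [NonUnitalCStarAlgebra B] {n : ℕ}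
    (M : Matrix (Fin n) (Fin n) B) : Prop :=
  ∃ y : Matrix (Fin n) (Fin n) B, M = y.conjTranspose * y

/-- A linear map between C*-algebras is completely positive if all the induced entrywise
maps between matrix algebras preserve positivity. -/
def CompletelyPositive {B C : Type*} [NonUnitalCStarAlgebra B] [NonUnitalCStarAlgebra C]
    (E : B →ₗ[ℂ] C) : Prop :=
  ∀ (n : ℕ) (M : Matrix (Fin n) (Fin n) B),
    MatrixIsPositive M → MatrixIsPositive (M.map ⇑E)

/-- A closed (ring-theoretic) two-sided ideal of `R`. -/
def IsClosedTwoSidedIdeal {R : Type*} [NonUnitalCStarAlgebra R] (S : Set R) : Prop :=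
  IsClosed S ∧ (0 : R) ∈ S ∧ (∀ x ∈ S, ∀ y ∈ S, x + y ∈ S) ∧ (∀ x ∈ S, -x ∈ S) ∧
    (∀ r : R, ∀ x ∈ S, r * x ∈ S) ∧ ∀ r : R, ∀ x ∈ S, x * r ∈ S

/-- A hereditary C*-subalgebra of `A`: a nonzero closed *-subalgebra `D` such that
`a ∈ D`, `0 ≤ b ≤ a` imply `b ∈ D`. -/
def IsHereditarySubalgebra {A : Type*} [NonUnitalCStarAlgebra A] [PartialOrder A]
    [StarOrderedRing A] (D : Set A) : Prop :=
  IsClosed D ∧ (∃ x ∈ D, x ≠ 0) ∧ (0 : A) ∈ D ∧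
    (∀ x ∈ D, ∀ y ∈ D, x + y ∈ D) ∧ (∀ (c : ℂ), ∀ x ∈ D, c • x ∈ D) ∧
    (∀ x ∈ D, ∀ y ∈ D, x * y ∈ D) ∧ (∀ x ∈ D, star x ∈ D) ∧
    ∀ a ∈ D, ∀ b : A, 0 ≤ b → b ≤ a → b ∈ D

/-!
An ideal `J` with `J ∩ A = {0}` satisfies `‖y‖ ≤ ‖y - j‖` for `y ∈ A` and `j ∈ J`, because `A` then
embeds isometrically into `B / J`. If `x ∈ J` is positive and `E x ≠ 0`, supportivity provides a `δ`
and a hereditary subalgebra on whose positive norm-one elements `a` we have `δ ≤ ‖a * E x * a‖`,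
and aperiodicity provides such an `a` and some `y ∈ A` with `a * x * a` very close to `y`. As
`a * x * a ∈ J`, the norm of `y`, and with it that of `a * x * a`, is small. This contradicts the
compression estimate `‖a * E x * a‖ ≤ ‖a * x * a‖`.

To obtain the compression estimate, write `x = y* y` and `y = y e + y (1 - e)`, where `e ∈ A` and
`e a` is close to `a`. The part `y e` contributes at most about `‖y a‖² = ‖a * x * a‖` since `E` is
the identity on `A`, the part `y (1 - e)` contributes next to nothing since `E` is contractive, and
the mixed terms are absorbed by a weighted arithmetic-geometric mean inequality.
-/

open Filter
open scoped CStarAlgebra Topology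

section ClosedIdeals

variable {R : Type*} [NonUnitalCStarAlgebra R] {J : Set R}

namespace IsClosedTwoSidedIdeal

theorem isClosed (hJ : IsClosedTwoSidedIdeal J) : IsClosed J := hJ.1

theorem zero_mem (hJ : IsClosedTwoSidedIdeal J) : (0 : R) ∈ J := hJ.2.1

theorem add_mem (hJ : IsClosedTwoSidedIdeal J) {x y : R} (hx : x ∈ J) (hy : y ∈ J) : x + y ∈ J :=
  hJ.2.2.1 x hx y hy

theorem neg_mem (hJ : IsClosedTwoSidedIdeal J) {x : R} (hx : x ∈ J) : -x ∈ J :=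
  hJ.2.2.2.1 x hx

theorem sub_mem (hJ : IsClosedTwoSidedIdeal J) {x y : R} (hx : x ∈ J) (hy : y ∈ J) : x - y ∈ J :=
  sub_eq_add_neg x y ▸ hJ.add_mem hx (hJ.neg_mem hy)

theorem mul_mem_left (hJ : IsClosedTwoSidedIdeal J) (r : R) {x : R} (hx : x ∈ J) : r * x ∈ J :=
  hJ.2.2.2.2.1 r x hx

theorem mul_mem_right (hJ : IsClosedTwoSidedIdeal J) (r : R) {x : R} (hx : x ∈ J) : x * r ∈ J :=
  hJ.2.2.2.2.2 r x hx

end IsClosedTwoSidedIdeal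

theorem exists_norm_mul_le_one_and_norm_sub_mul_mul_le {a : R} (ha : IsSelfAdjoint a) {s : ℝ}
    (hs : 0 < s) : ∃ v : R, ‖v * a‖ ≤ 1 ∧ ‖a - a * (v * a)‖ ≤ s := by
  have hpos (t : ℝ) : 0 < t ^ 2 + s ^ 2 := by positivity
  set g : ℝ → ℝ := fun t ↦ t / (t ^ 2 + s ^ 2) with hg
  have hgc : Continuous g := by fun_prop (disch := exact fun t ↦ (hpos t).ne')
  have hva : cfcₙ g a * a = cfcₙ (fun t ↦ g t * t) a := by
    rw [cfcₙ_mul g (fun t ↦ t) a, cfcₙ_id' ℝ a]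
  have hsub : a - a * (cfcₙ g a * a) = cfcₙ (fun t ↦ t - t * (g t * t)) a := by
    rw [cfcₙ_sub (fun t ↦ t) (fun t ↦ t * (g t * t)) a, cfcₙ_mul (fun t ↦ t) (fun t ↦ g t * t) a,
      cfcₙ_id' ℝ a, hva]
  refine ⟨cfcₙ g a, hva ▸ norm_cfcₙ_le fun t _ ↦ ?_, hsub ▸ norm_cfcₙ_le fun t _ ↦ ?_⟩
  · have : g t * t = t ^ 2 / (t ^ 2 + s ^ 2) := by simp only [hg]; ring
    rw [this, Real.norm_of_nonneg (by positivity), div_le_one (hpos t)]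
    exact le_add_of_nonneg_right (sq_nonneg s)
  · have : t - t * (g t * t) = t * s ^ 2 / (t ^ 2 + s ^ 2) := by
      have := (hpos t).ne'
      simp only [hg]
      field_simp
      ring
    rw [this, norm_div, norm_mul, Real.norm_of_nonneg (hpos t).le,
      Real.norm_of_nonneg (sq_nonneg s), Real.norm_eq_abs, div_le_iff₀ (hpos t), ← sq_abs t]
    nlinarith [mul_nonneg hs.le (sq_nonneg (|t| - s)), mul_nonneg hs.le (sq_nonneg (|t| + s))]

theorem cfcₙ_max_sub_mul_self {z : R} (hz : IsSelfAdjoint z) {r : ℝ} (hr : 0 ≤ r) :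
    cfcₙ (fun t ↦ max (t - r) 0) z * cfcₙ (fun t ↦ max (t - r) 0) z =
      cfcₙ (fun t ↦ √(t - r)) z * z * cfcₙ (fun t ↦ √(t - r)) z -
        r • (cfcₙ (fun t ↦ √(t - r)) z * cfcₙ (fun t ↦ √(t - r)) z) := by
  have hsqrt : √(0 - r) = 0 := Real.sqrt_eq_zero_of_nonpos (by simpa using hr)
  nth_rewrite 4 [← cfcₙ_id' ℝ z]
  rw [← cfcₙ_mul _ _ z, ← cfcₙ_mul _ _ z, ← cfcₙ_mul _ _ z, ← cfcₙ_mul _ _ z, ← cfcₙ_smul r _ z,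
    ← cfcₙ_sub _ _ z]
  refine cfcₙ_congr fun t _ ↦ ?_
  rcases le_total t r with htr | hrt
  · simp only [max_eq_right (sub_nonpos.mpr htr), Real.sqrt_eq_zero_of_nonpos (sub_nonpos.mpr htr),
      mul_zero, zero_mul, smul_zero, sub_zero]
  · rw [max_eq_left (sub_nonneg.mpr hrt), mul_right_comm,
      Real.mul_self_sqrt (sub_nonneg.mpr hrt), smul_eq_mul]
    ring

variable [PartialOrder R] [StarOrderedRing R]

theorem star_sub_mul_mul_sub_mul_le {b j : R} (hbj : star b * b ≤ j) (u : R) :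
    star (b - b * u) * (b - b * u) ≤ j - j * u - star u * (j - j * u) := by
  obtain ⟨d, hd⟩ := CStarAlgebra.nonneg_iff_eq_star_mul_self.mp (sub_nonneg.mpr hbj)
  obtain rfl : j = star b * b + star d * d := by rw [← hd, add_sub_cancel]
  rw [← sub_nonneg]
  convert star_mul_self_nonneg (d - d * u) using 1
  simp only [star_sub, star_mul]
  noncomm_ring

namespace IsClosedTwoSidedIdeal

theorem mem_of_star_mul_self_le (hJ : IsClosedTwoSidedIdeal J) {b j : R} (hbj : star b * b ≤ j)
    (hj : j ∈ J) : b ∈ J := by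
  rw [← hJ.isClosed.closure_eq, Metric.mem_closure_iff]
  intro ε hε
  have hjs : IsSelfAdjoint j := .of_nonneg ((star_mul_self_nonneg b).trans hbj)
  obtain ⟨v, hv, hjv⟩ := exists_norm_mul_le_one_and_norm_sub_mul_mul_le hjs
    (show 0 < ε ^ 2 / 4 by positivity)
  refine ⟨b * (v * j), hJ.mul_mem_left _ (hJ.mul_mem_left _ hj), ?_⟩
  have hsq : ‖b - b * (v * j)‖ ^ 2 ≤ ε ^ 2 / 2 := calc
    ‖b - b * (v * j)‖ ^ 2 = ‖star (b - b * (v * j)) * (b - b * (v * j))‖ := by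
      rw [CStarRing.norm_star_mul_self, sq]
    _ ≤ ‖j - j * (v * j) - star (v * j) * (j - j * (v * j))‖ :=
      CStarAlgebra.norm_le_norm_of_nonneg_of_le (star_mul_self_nonneg _)
        (star_sub_mul_mul_sub_mul_le hbj _)
    _ ≤ ‖j - j * (v * j)‖ + ‖star (v * j)‖ * ‖j - j * (v * j)‖ :=
      (norm_sub_le _ _).trans (add_le_add_right (norm_mul_le _ _) _)
    _ ≤ ε ^ 2 / 4 + 1 * (ε ^ 2 / 4) := by
      rw [norm_star]
      gcongr
    _ = ε ^ 2 / 2 := by ring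
  rw [dist_eq_norm]
  exact lt_of_pow_lt_pow_left₀ 2 hε.le (hsq.trans_lt (half_lt_self (by positivity)))

theorem star_mem (hJ : IsClosedTwoSidedIdeal J) {x : R} (hx : x ∈ J) : star x ∈ J :=
  hJ.mem_of_star_mul_self_le le_rfl <| by
    simpa only [star_star] using hJ.mul_mem_right (star x) hx

end IsClosedTwoSidedIdeal

end ClosedIdeals

section QuotientNorm

variable {A B : Type*} [NonUnitalCStarAlgebra A] [PartialOrder A] [StarOrderedRing A]
  [NonUnitalCStarAlgebra B] [PartialOrder B] [StarOrderedRing B] {ι : A →⋆ₙₐ[ℂ] B} {J : Set B}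

theorem norm_le_norm_sub_of_inter_range_eq_zero_of_nonneg (hι : Function.Injective ι)
    (hJ : IsClosedTwoSidedIdeal J) (hJA : J ∩ Set.range ι = {0}) {z : A} (hz : 0 ≤ z) {j : B}
    (hj : j ∈ J) (hjs : IsSelfAdjoint j) : ‖z‖ ≤ ‖ι z - j‖ := by
  have hzs : IsSelfAdjoint z := .of_nonneg hz
  set r := ‖ι z - j‖
  set f : A := cfcₙ (fun t ↦ √(t - r)) z
  set w : A := cfcₙ (fun t ↦ max (t - r) 0) z
  have hf : star (ι f) = ι f := by
    rw [← map_star, (cfcₙ_predicate _ z : IsSelfAdjoint f).star_eq]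
  have hw : star (ι w) = ι w := by
    rw [← map_star, (cfcₙ_predicate _ z : IsSelfAdjoint w).star_eq]
  have hww : star (ι w) * ι w ≤ ι f * j * ι f := by
    have hsub : ι f * (ι z - j) * ι f ≤ r • (ι f * ι f) := by
      simpa only [hf] using
        CStarAlgebra.star_left_conjugate_le_norm_smul (a := ι f) (hb := (hzs.map ι).sub hjs)
    rw [hw, ← map_mul, cfcₙ_max_sub_mul_self hzs (norm_nonneg _), map_sub, ← Complex.coe_smul,
      map_smul, Complex.coe_smul, map_mul, map_mul, map_mul, sub_le_comm]
    rwa [mul_sub, sub_mul] at hsub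
  have hwJ : ι w ∈ J := hJ.mem_of_star_mul_self_le hww (hJ.mul_mem_right _ (hJ.mul_mem_left _ hj))
  have hw0 : w = 0 := (map_eq_zero_iff ι hι).mp (hJA.subset ⟨hwJ, Set.mem_range_self w⟩)
  rw [← cfcₙ_id' ℝ z]
  refine norm_cfcₙ_le fun t ht ↦ ?_
  have hmax := norm_apply_le_norm_cfcₙ (fun t ↦ max (t - r) 0) z ht (by fun_prop)
    (by simp [r]) hzs
  rw [show cfcₙ (fun t ↦ max (t - r) 0) z = 0 from hw0, norm_zero, norm_le_zero_iff,
    max_eq_right_iff, sub_nonpos] at hmax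
  rwa [Real.norm_of_nonneg (quasispectrum_nonneg_of_nonneg z hz t ht)]

theorem norm_le_norm_sub_of_inter_range_eq_zero (hι : Function.Injective ι)
    (hJ : IsClosedTwoSidedIdeal J) (hJA : J ∩ Set.range ι = {0}) (y : A) {j : B} (hj : j ∈ J) :
    ‖y‖ ≤ ‖ι y - j‖ := by
  have hsq : star (ι y - j) * (ι y - j) =
      ι (star y * y) - (star (ι y) * j + star j * ι y - star j * j) := by
    rw [star_sub, map_mul, map_star]
    noncomm_ring
  have hk : star (ι y) * j + star j * ι y - star j * j ∈ J :=
    hJ.sub_mem (hJ.add_mem (hJ.mul_mem_left _ hj) (hJ.mul_mem_right _ (hJ.star_mem hj)))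
      (hJ.mul_mem_left _ hj)
  have hks : IsSelfAdjoint (star (ι y) * j + star j * ι y - star j * j) := by
    simp only [IsSelfAdjoint, star_sub, star_add, star_mul, star_star, add_comm]
  have hle := norm_le_norm_sub_of_inter_range_eq_zero_of_nonneg hι hJ hJA
    (star_mul_self_nonneg y) hk hks
  rw [← hsq, CStarRing.norm_star_mul_self, CStarRing.norm_star_mul_self] at hle
  exact (mul_self_le_mul_self_iff (norm_nonneg _) (norm_nonneg _)).mpr hle

end QuotientNorm

section PositiveMaps

theorem map_eq_zero_of_nonneg_of_le {R M N : Type*} [Semiring R] [AddCommMonoid M] [PartialOrder M]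
    [Module R M] [AddCommMonoid N] [PartialOrder N] [Module R N] (f : M →ₚ[R] N) {x y : M}
    (hx : 0 ≤ x) (hxy : x ≤ y) (hy : f y = 0) : f x = 0 :=
  le_antisymm (hy ▸ OrderHomClass.mono f hxy) (f.map_nonneg hx)

variable {B C : Type*} [NonUnitalCStarAlgebra B] [PartialOrder B] [StarOrderedRing B]
  [NonUnitalCStarAlgebra C]

theorem star_add_mul_add_le (p q : B) {t : ℝ} (ht : 0 < t) :
    star (p + q) * (p + q) ≤ (1 + t) • (star p * p) + (1 + t⁻¹) • (star q * q) := by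
  rw [← sub_nonneg]
  convert smul_nonneg (inv_nonneg.mpr ht.le) (star_mul_self_nonneg (t • p - q)) using 1
  simp only [star_sub, star_add, star_smul, star_trivial, sub_mul, mul_sub, add_mul, mul_add,
    smul_sub, smul_mul_assoc, mul_smul_comm, smul_smul, add_smul, one_smul,
    inv_mul_cancel₀ ht.ne', inv_mul_cancel_left₀ ht.ne']
  abel

theorem star_mul_mul_mul_le_sq_smul (r b : B) :
    star (r * b) * (r * b) ≤ (‖r‖ ^ 2) • (star b * b) := by
  have h := CStarAlgebra.star_left_conjugate_le_norm_smul (a := b) (hb := .star_mul_self r)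
  rwa [CStarRing.norm_star_mul_self, ← sq, ← mul_assoc, mul_assoc, ← star_mul] at h

/-- The ideal `N_E` of a positive map `E`: those `b` for which `b * B` is contained in the left
kernel `{x | E (x* x) = 0}`. -/
def nullIdeal (E : B → C) : Set B :=
  {b | ∀ c, E (star (b * c) * (b * c)) = 0}

variable [PartialOrder C] [StarOrderedRing C] (E : B →ₚ[ℂ] C)

theorem isClosedTwoSidedIdeal_nullIdeal : IsClosedTwoSidedIdeal (nullIdeal E) := by
  refine ⟨?isClosed, fun c ↦ ?zero, fun x hx y hy c ↦ ?add, fun x hx c ↦ ?neg, fun r x hx c ↦ ?left,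
    fun r x hx c ↦ ?right⟩
  case isClosed =>
    rw [nullIdeal, Set.ofPred_forall]
    exact isClosed_iInter fun c ↦
      isClosed_eq ((map_continuous E).comp (by fun_prop)) continuous_const
  case zero => rw [zero_mul, mul_zero, map_zero]
  case add =>
    refine map_eq_zero_of_nonneg_of_le E (star_mul_self_nonneg _)
      (add_mul x y c ▸ star_add_mul_add_le (x * c) (y * c) one_pos) ?_
    simp only [map_add, PositiveLinearMap.map_smul_of_tower, hx c, hy c, smul_zero, add_zero]
  case neg => rw [neg_mul, star_neg, neg_mul_neg, hx c]
  case left =>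
    refine map_eq_zero_of_nonneg_of_le E (star_mul_self_nonneg _)
      (mul_assoc r x c ▸ star_mul_mul_mul_le_sq_smul r (x * c)) ?_
    rw [PositiveLinearMap.map_smul_of_tower, hx c, smul_zero]
  case right => exact mul_assoc x r c ▸ hx (r * c)

end PositiveMaps

section Compression

theorem tendsto_mul_mul_of_isIncreasingApproximateUnit {B : Type*} [NonUnitalCStarAlgebra B]
    [PartialOrder B] [StarOrderedRing B] {l : Filter B} (hl : l.IsIncreasingApproximateUnit)
    (m : B) : Tendsto (fun u ↦ u * m * u) l (𝓝 m) := by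
  have hleft : Tendsto (fun u ↦ u * m - m) l (𝓝 0) := by
    simpa only [sub_self] using (hl.tendsto_mul_right m).sub_const m
  have hbdd : IsBoundedUnder (· ≤ ·) l (fun u : B ↦ ‖u‖) :=
    ⟨1, eventually_map.mpr hl.eventually_norm⟩
  have hsum := (hleft.zero_mul_isBoundedUnder_le hbdd).add (hl.tendsto_mul_left m)
  simpa only [id, sub_mul, sub_add_cancel, zero_add] using hsum

theorem norm_le_sq_of_nonneg_of_le_sq_smul {C : Type*} [NonUnitalCStarAlgebra C] [PartialOrder C]
    [StarOrderedRing C] {w k : C} {c : ℝ} (hw : 0 ≤ w) (hwk : w ≤ c ^ 2 • (star k * k)) :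
    ‖w‖ ≤ (c * ‖k‖) ^ 2 := calc
  ‖w‖ ≤ ‖c ^ 2 • (star k * k)‖ := CStarAlgebra.norm_le_norm_of_nonneg_of_le hw hwk
  _ = (c * ‖k‖) ^ 2 := by
    rw [norm_smul, Real.norm_of_nonneg (sq_nonneg c), CStarRing.norm_star_mul_self, mul_pow, sq ‖k‖]

variable {A B C : Type*} [NonUnitalCStarAlgebra A]
  [NonUnitalCStarAlgebra B] [PartialOrder B] [StarOrderedRing B]
  [NonUnitalCStarAlgebra C] [PartialOrder C] [StarOrderedRing C]
  {ι : A →⋆ₙₐ[ℂ] B} {κ : A →⋆ₙₐ[ℂ] C} {E : B →ₚ[ℂ] C}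

-- The hypothesis `hw` expresses `w ≤ c • (1 - k)` without a unit; the inequality `E 1 ≤ 1` that one
-- would like to apply to it becomes `E (u * u) ≤ 1` along an approximate unit.
theorem star_mul_map_mul_le_smul (hcontr : ∀ b, ‖E b‖ ≤ ‖b‖) (hres : ∀ a, E (ι a) = κ a)
    (a : A) {k : A} {w : B} {c : ℝ} (hc : 0 ≤ c)
    (hw : ∀ u, star u * w * u ≤ c • (star u * u - star u * ι k * u)) :
    star (κ a) * E w * κ a ≤ c • κ (star a * a - star a * k * a) := by
  have hu := CStarAlgebra.increasingApproximateUnit B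
  have htendsto (m : B) : Tendsto (fun u ↦ star (κ a) * E (u * m * u) * κ a)
      (CStarAlgebra.approximateUnit B) (𝓝 (star (κ a) * E m * κ a)) :=
    ((((map_continuous E).tendsto m).comp
      (tendsto_mul_mul_of_isIncreasingApproximateUnit hu m)).const_mul _).mul_const _
  have hlim := ((htendsto (ι k)).const_sub (star (κ a) * κ a)).const_smul c
  rw [map_sub, map_mul, map_mul, map_mul, map_star, ← hres k]
  refine le_of_tendsto_of_tendsto (htendsto w) hlim ?_
  filter_upwards [hu.eventually_isSelfAdjoint, hu.eventually_norm] with u hus hu1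
  have hE : E (u * w * u) ≤ c • (E (u * u) - E (u * ι k * u)) := by
    have h := OrderHomClass.mono E (hw u)
    rwa [hus.star_eq, PositiveLinearMap.map_smul_of_tower, map_sub] at h
  have huu : star (κ a) * E (u * u) * κ a ≤ star (κ a) * κ a := calc
    star (κ a) * E (u * u) * κ a ≤ ‖E (u * u)‖ • (star (κ a) * κ a) :=
      CStarAlgebra.star_left_conjugate_le_norm_smul
        (hb := .of_nonneg (E.map_nonneg hus.mul_self_nonneg))
    _ ≤ (1 : ℝ) • (star (κ a) * κ a) := by
      refine smul_le_smul_of_nonneg_right ?_ (star_mul_self_nonneg _)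
      exact (hcontr _).trans ((norm_mul_le _ _).trans (mul_le_one₀ hu1 (norm_nonneg _) hu1))
    _ = star (κ a) * κ a := one_smul _ _
  calc star (κ a) * E (u * w * u) * κ a
      ≤ star (κ a) * (c • (E (u * u) - E (u * ι k * u))) * κ a :=
        star_left_conjugate_le_conjugate hE _
    _ = c • (star (κ a) * E (u * u) * κ a - star (κ a) * E (u * ι k * u) * κ a) := by
        rw [mul_smul_comm, smul_mul_assoc, mul_sub, sub_mul]
    _ ≤ c • (star (κ a) * κ a - star (κ a) * E (u * ι k * u) * κ a) := by gcongr

theorem star_mul_map_mul_nonneg (a : A) (y : B) :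
    0 ≤ star (κ a) * E (star y * y) * κ a :=
  star_left_conjugate_nonneg (E.map_nonneg (star_mul_self_nonneg y)) _

theorem norm_star_mul_map_sub_mul_le (hcontr : ∀ b, ‖E b‖ ≤ ‖b‖) (hres : ∀ a, E (ι a) = κ a)
    (y : B) (a e : A) :
    ‖star (κ a) * E (star (y - y * ι e) * (y - y * ι e)) * κ a‖ ≤ (‖y‖ * ‖a - e * a‖) ^ 2 := by
  -- `star (1 - e) * (1 - e) = 1 - (e + star e - star e * e)`
  have hw (u : B) : star u * (star (y - y * ι e) * (y - y * ι e)) * u ≤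
      ‖y‖ ^ 2 • (star u * u - star u * ι (e + star e - star e * e) * u) := by
    convert star_mul_mul_mul_le_sq_smul y (u - ι e * u) using 1
    · simp only [star_sub, star_mul]
      noncomm_ring
    · simp only [star_sub, star_mul, map_sub, map_add, map_mul, map_star]
      noncomm_ring
  have hcut : star a * a - star a * (e + star e - star e * e) * a =
      star (a - e * a) * (a - e * a) := by
    simp only [star_sub, star_mul]
    noncomm_ring
  have hle := star_mul_map_mul_le_smul hcontr hres a (sq_nonneg _) hw
  rw [hcut, map_mul κ, map_star κ] at hle
  refine (norm_le_sq_of_nonneg_of_le_sq_smul (star_mul_map_mul_nonneg a _) hle).trans ?_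
  gcongr
  exact NonUnitalStarAlgHom.norm_apply_le κ _

theorem norm_star_mul_map_mul_mul_le (hres : ∀ a, E (ι a) = κ a) (y : B) (a v : A) :
    ‖star (κ a) * E (star (y * ι v) * (y * ι v)) * κ a‖ ≤ (‖y‖ * ‖v * a‖) ^ 2 := by
  have hE : E (star (y * ι v) * (y * ι v)) ≤ ‖y‖ ^ 2 • (star (κ v) * κ v) := by
    have h := OrderHomClass.mono E (star_mul_mul_mul_le_sq_smul y (ι v))
    rwa [PositiveLinearMap.map_smul_of_tower, ← map_star, ← map_mul, hres, map_mul κ,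
      map_star κ] at h
  have hle : star (κ a) * E (star (y * ι v) * (y * ι v)) * κ a ≤
      ‖y‖ ^ 2 • (star (κ (v * a)) * κ (v * a)) := by
    convert star_left_conjugate_le_conjugate hE (κ a) using 1
    simp only [map_mul, star_mul, mul_smul_comm, smul_mul_assoc, mul_assoc]
  refine (norm_le_sq_of_nonneg_of_le_sq_smul (star_mul_map_mul_nonneg a _) hle).trans ?_
  gcongr
  exact NonUnitalStarAlgHom.norm_apply_le κ _

theorem norm_star_mul_map_mul_le_add (hcontr : ∀ b, ‖E b‖ ≤ ‖b‖) (hres : ∀ a, E (ι a) = κ a)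
    (y : B) {a : A} (ha : IsSelfAdjoint a) {s : ℝ} (hs : 0 < s) :
    ‖star (κ a) * E (star y * y) * κ a‖ ≤
      (1 + s) * ‖y * ι a‖ ^ 2 + (1 + s⁻¹) * (‖y‖ * s) ^ 2 := by
  obtain ⟨v, hv, hav⟩ := exists_norm_mul_le_one_and_norm_sub_mul_mul_le ha hs
  -- `p = y e` and `q = y (1 - e)` for the approximate left unit `e = a v` of `a`
  set p := y * ι a * ι v with hp
  set q := y - y * ι (a * v) with hq
  have hpE : ‖star (κ a) * E (star p * p) * κ a‖ ≤ ‖y * ι a‖ ^ 2 :=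
    (norm_star_mul_map_mul_mul_le hres _ _ _).trans <| by
      gcongr
      exact mul_le_of_le_one_right (norm_nonneg _) hv
  have hqE : ‖star (κ a) * E (star q * q) * κ a‖ ≤ (‖y‖ * s) ^ 2 :=
    (norm_star_mul_map_sub_mul_le hcontr hres y a _).trans (by rw [mul_assoc a]; gcongr)
  have hle : E (star y * y) ≤ (1 + s) • E (star p * p) + (1 + s⁻¹) • E (star q * q) := by
    have h := OrderHomClass.mono E (star_add_mul_add_le p q hs)
    rwa [show p + q = y by rw [hp, hq, map_mul, mul_assoc, add_sub_cancel], map_add,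
      PositiveLinearMap.map_smul_of_tower, PositiveLinearMap.map_smul_of_tower] at h
  calc ‖star (κ a) * E (star y * y) * κ a‖
      ≤ ‖star (κ a) * ((1 + s) • E (star p * p) + (1 + s⁻¹) • E (star q * q)) * κ a‖ :=
        CStarAlgebra.norm_le_norm_of_nonneg_of_le (star_mul_map_mul_nonneg a y)
          (star_left_conjugate_le_conjugate hle _)
    _ = ‖(1 + s) • (star (κ a) * E (star p * p) * κ a) +
          (1 + s⁻¹) • (star (κ a) * E (star q * q) * κ a)‖ := by
        simp only [mul_add, add_mul, mul_smul_comm, smul_mul_assoc]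
    _ ≤ (1 + s) * ‖star (κ a) * E (star p * p) * κ a‖ +
          (1 + s⁻¹) * ‖star (κ a) * E (star q * q) * κ a‖ := by
        refine (norm_add_le _ _).trans_eq ?_
        rw [norm_smul, norm_smul, Real.norm_of_nonneg (by positivity),
          Real.norm_of_nonneg (by positivity)]
    _ ≤ (1 + s) * ‖y * ι a‖ ^ 2 + (1 + s⁻¹) * (‖y‖ * s) ^ 2 := by gcongr

theorem norm_mul_map_mul_le (hcontr : ∀ b, ‖E b‖ ≤ ‖b‖) (hres : ∀ a, E (ι a) = κ a)
    {a : A} (ha : IsSelfAdjoint a) {x : B} (hx : 0 ≤ x) :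
    ‖κ a * E x * κ a‖ ≤ ‖ι a * x * ι a‖ := by
  obtain ⟨y, rfl⟩ := CStarAlgebra.nonneg_iff_eq_star_mul_self.mp hx
  have hnorm : ‖ι a * (star y * y) * ι a‖ = ‖y * ι a‖ ^ 2 := by
    rw [sq, ← CStarRing.norm_star_mul_self, star_mul, (ha.map ι).star_eq, mul_assoc, mul_assoc,
      mul_assoc]
  have hlim : Tendsto (fun s : ℝ ↦ (1 + s) * ‖y * ι a‖ ^ 2 + (s ^ 2 + s) * ‖y‖ ^ 2) (𝓝[>] 0)
      (𝓝 (‖y * ι a‖ ^ 2)) :=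
    tendsto_nhdsWithin_of_tendsto_nhds <| Continuous.tendsto' (by fun_prop) _ _ (by simp)
  rw [hnorm]
  refine ge_of_tendsto hlim (eventually_mem_nhdsWithin.mono fun s hs ↦ ?_)
  have hs0 : s ≠ 0 := (Set.mem_Ioi.mp hs).ne'
  calc ‖κ a * E (star y * y) * κ a‖ ≤ (1 + s) * ‖y * ι a‖ ^ 2 + (1 + s⁻¹) * (‖y‖ * s) ^ 2 := by
        simpa only [(ha.map κ).star_eq] using norm_star_mul_map_mul_le_add hcontr hres y ha hs
    _ = (1 + s) * ‖y * ι a‖ ^ 2 + (s ^ 2 + s) * ‖y‖ ^ 2 := by field_simp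

end Compression

section Inclusions

variable {A B C : Type*} [NonUnitalCStarAlgebra A] [NonUnitalCStarAlgebra B]
  [NonUnitalCStarAlgebra C]

/-- Aperiodicity of the inclusion `ι : A → B`: every `x : B` can be compressed arbitrarily close
to `A` by a positive norm-one element of any prescribed hereditary subalgebra of `A`. -/
def IsAperiodicInclusion [PartialOrder A] [StarOrderedRing A] (ι : A →⋆ₙₐ[ℂ] B) : Prop :=
  ∀ x : B, ∀ D : Set A, IsHereditarySubalgebra D → ∀ ε : ℝ, 0 < ε →
    ∃ a ∈ D, 0 ≤ a ∧ ‖a‖ = 1 ∧ ∃ y : A, ‖ι a * x * ι a - ι y‖ < ε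

/-- Supportivity of a map `E : B → C`, where `κ : A → C` is the inclusion into its codomain: a
nonzero value of `E` on a positive element is bounded below on some hereditary subalgebra of `A`. -/
def IsSupportive [PartialOrder A] [StarOrderedRing A] [PartialOrder B] (κ : A →⋆ₙₐ[ℂ] C)
    (E : B → C) : Prop :=
  ∀ b : B, 0 ≤ b → E b ≠ 0 → ∃ δ : ℝ, 0 < δ ∧ ∃ D : Set A, IsHereditarySubalgebra D ∧
    ∀ x ∈ D, 0 ≤ x → ‖x‖ = 1 → δ ≤ ‖κ x * E b * κ x‖

/-- `N` is the hidden ideal of the inclusion `ι : A → B`: the largest closed ideal of `B` among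
those meeting `A` trivially. -/
def IsHiddenIdeal (ι : A →⋆ₙₐ[ℂ] B) (N : Set B) : Prop :=
  IsClosedTwoSidedIdeal N ∧
    ∀ J : Set B, IsClosedTwoSidedIdeal J → (J ∩ Set.range ι = {0} ↔ J ⊆ N)

/-- Simplicity in the C*-algebraic sense, for closed ideals; the zero algebra counts as simple. -/
def IsTopologicallySimple (B : Type*) [NonUnitalCStarAlgebra B] : Prop :=
  ∀ J : Set B, IsClosedTwoSidedIdeal J → J = {0} ∨ J = Set.univ

/-- The closed linear span of `B * I * B`. -/
def closedIdealSpan (ι : A →⋆ₙₐ[ℂ] B) (I : Set A) : Set B :=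
  closure (Submodule.span ℂ {z : B | ∃ b₁ b₂ : B, ∃ i ∈ I, z = b₁ * ι i * b₂} : Set B)

/-- `B`-minimality of `A`, for the inclusion `ι : A → B`. -/
def IsMinimalInclusion (ι : A →⋆ₙₐ[ℂ] B) : Prop :=
  ∀ I : Set A, IsClosedTwoSidedIdeal I → I ≠ {0} → closedIdealSpan ι I = Set.univ

variable {ι : A →⋆ₙₐ[ℂ] B} {κ : A →⋆ₙₐ[ℂ] C} {I : Set A} {J : Set B}

theorem isClosedTwoSidedIdeal_closedIdealSpan (ι : A →⋆ₙₐ[ℂ] B) (I : Set A) :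
    IsClosedTwoSidedIdeal (closedIdealSpan ι I) := by
  set M := Submodule.span ℂ {z : B | ∃ b₁ b₂ : B, ∃ i ∈ I, z = b₁ * ι i * b₂} with hM
  have hmap (f : B →ₗ[ℂ] B) (hf : Continuous f)
      (hgen : ∀ b₁ b₂ : B, ∀ i ∈ I, f (b₁ * ι i * b₂) ∈ M) :
      ∀ x ∈ M.topologicalClosure, f x ∈ M.topologicalClosure := by
    have hle : M ≤ M.comap f := by
      rw [hM, Submodule.span_le]
      rintro _ ⟨b₁, b₂, i, hi, rfl⟩
      exact hgen b₁ b₂ i hi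
    exact fun x hx ↦ map_mem_closure hf hx hle
  refine ⟨M.isClosed_topologicalClosure, M.topologicalClosure.zero_mem,
    fun x hx y hy ↦ M.topologicalClosure.add_mem hx hy,
    fun x hx ↦ M.topologicalClosure.neg_mem hx,
    fun r ↦ hmap (LinearMap.mulLeft ℂ r) (continuous_const_mul r) fun b₁ b₂ i hi ↦ ?_,
    fun r ↦ hmap (LinearMap.mulRight ℂ r) (continuous_mul_const r) fun b₁ b₂ i hi ↦ ?_⟩
  · exact Submodule.subset_span
      ⟨r * b₁, b₂, i, hi, by rw [LinearMap.mulLeft_apply, mul_assoc, mul_assoc, mul_assoc]⟩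
  · exact Submodule.subset_span
      ⟨b₁, b₂ * r, i, hi, by rw [LinearMap.mulRight_apply, mul_assoc (b₁ * ι i)]⟩

theorem closedIdealSpan_subset (hJ : IsClosedTwoSidedIdeal J) (hIJ : I ⊆ ι ⁻¹' J) :
    closedIdealSpan ι I ⊆ J := by
  refine closure_minimal (fun x hx ↦ ?_) hJ.isClosed
  induction hx using Submodule.closure_induction with
  | zero => exact hJ.zero_mem
  | add x y _ _ hx hy => exact hJ.add_mem hx hy
  | smul_mem c x hx =>
    obtain ⟨b₁, b₂, i, hi, rfl⟩ := hx
    rw [← smul_mul_assoc, ← smul_mul_assoc]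
    exact hJ.mul_mem_right _ (hJ.mul_mem_left _ (hIJ hi))

theorem subset_zero_of_closedIdealSpan_eq_zero (hι : Function.Injective ι)
    (h : closedIdealSpan ι I = {0}) : I ⊆ {0} := by
  intro i hi
  have hmem : ι (star i) * ι i * ι (star i * i) ∈ closedIdealSpan ι I :=
    subset_closure (Submodule.subset_span ⟨_, _, i, hi, rfl⟩)
  rw [h, Set.mem_singleton_iff, ← map_mul, ← map_mul, map_eq_zero_iff ι hι] at hmem
  have hsq : star (star i * i) * (star i * i) = 0 := by rwa [star_mul, star_star]
  rwa [CStarRing.star_mul_self_eq_zero_iff, CStarRing.star_mul_self_eq_zero_iff] at hsq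

namespace IsClosedTwoSidedIdeal

theorem preimage (ι : A →⋆ₙₐ[ℂ] B) (hJ : IsClosedTwoSidedIdeal J) :
    IsClosedTwoSidedIdeal (ι ⁻¹' J) := by
  refine ⟨hJ.isClosed.preimage (map_continuous ι), ?_, fun x hx y hy ↦ ?_, fun x hx ↦ ?_,
    fun r x hx ↦ ?_, fun r x hx ↦ ?_⟩ <;> rw [Set.mem_preimage]
  · exact map_zero ι ▸ hJ.zero_mem
  · exact map_add ι x y ▸ hJ.add_mem hx hy
  · exact map_neg ι x ▸ hJ.neg_mem hx
  · exact map_mul ι r x ▸ hJ.mul_mem_left (ι r) hx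
  · exact map_mul ι x r ▸ hJ.mul_mem_right (ι r) hx

theorem inter_range_eq_zero_of_subset_nullIdeal {E : B → C} (hJ : IsClosedTwoSidedIdeal J)
    (hκ : Function.Injective κ) (hres : ∀ a, E (ι a) = κ a) (hJE : J ⊆ nullIdeal E) :
    J ∩ Set.range ι = {0} := by
  refine Set.Subset.antisymm ?_ (Set.singleton_subset_iff.mpr ⟨hJ.zero_mem, 0, map_zero ι⟩)
  rintro _ ⟨ha, a, rfl⟩
  have h := hJE ha (ι (star a))
  rw [← map_mul, ← map_star, ← map_mul, hres, map_eq_zero_iff κ hκ,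
    CStarRing.star_mul_self_eq_zero_iff, CStarRing.mul_star_self_eq_zero_iff] at h
  rw [h, map_zero, Set.mem_singleton_iff]

variable [PartialOrder A] [StarOrderedRing A] [PartialOrder B] [StarOrderedRing B]
  [PartialOrder C] [StarOrderedRing C] {E : B →ₚ[ℂ] C}

theorem subset_nullIdeal_of_inter_range_eq_zero (hJ : IsClosedTwoSidedIdeal J)
    (hι : Function.Injective ι) (hcontr : ∀ b, ‖E b‖ ≤ ‖b‖) (hres : ∀ a, E (ι a) = κ a)
    (hap : IsAperiodicInclusion ι) (hsupp : IsSupportive κ E) (hJA : J ∩ Set.range ι = {0}) :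
    J ⊆ nullIdeal E := by
  intro b hb c
  by_contra hne
  set x := star (b * c) * (b * c)
  have hx : 0 ≤ x := star_mul_self_nonneg _
  have hxJ : x ∈ J := hJ.mul_mem_left _ (hJ.mul_mem_right _ hb)
  obtain ⟨δ, hδ, D, hD, hDδ⟩ := hsupp x hx hne
  obtain ⟨a, haD, ha, ha1, y, hy⟩ := hap x D hD (δ / 2) (half_pos hδ)
  have hlower : δ ≤ ‖ι a * x * ι a‖ :=
    (hDδ a haD ha ha1).trans (norm_mul_map_mul_le hcontr hres (.of_nonneg ha) hx)
  have hupper : ‖ι a * x * ι a‖ < δ := calc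
    ‖ι a * x * ι a‖ ≤ ‖ι a * x * ι a - ι y‖ + ‖ι y‖ := norm_le_norm_sub_add _ _
    _ ≤ ‖ι a * x * ι a - ι y‖ + ‖ι y - ι a * x * ι a‖ := by
      gcongr
      exact (NonUnitalStarAlgHom.norm_apply_le ι y).trans
        (norm_le_norm_sub_of_inter_range_eq_zero hι hJ hJA y
          (hJ.mul_mem_right _ (hJ.mul_mem_left _ hxJ)))
    _ < δ := by
      rw [norm_sub_rev (ι y)]
      linarith
  exact hlower.not_gt hupper

end IsClosedTwoSidedIdeal

theorem isHiddenIdeal_nullIdeal [PartialOrder A] [StarOrderedRing A] [PartialOrder B]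
    [StarOrderedRing B] [PartialOrder C] [StarOrderedRing C] {E : B →ₚ[ℂ] C}
    (hκ : Function.Injective κ) (hcontr : ∀ b, ‖E b‖ ≤ ‖b‖) (hres : ∀ a, E (ι a) = κ a)
    (hap : IsAperiodicInclusion ι) (hsupp : IsSupportive κ E) : IsHiddenIdeal ι (nullIdeal E) := by
  have hι : Function.Injective ι := .of_comp (f := E) ((funext hres : E ∘ ι = κ) ▸ hκ)
  exact ⟨isClosedTwoSidedIdeal_nullIdeal E, fun J hJ ↦
    ⟨hJ.subset_nullIdeal_of_inter_range_eq_zero hι hcontr hres hap hsupp,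
      hJ.inter_range_eq_zero_of_subset_nullIdeal hκ hres⟩⟩

theorem IsHiddenIdeal.isTopologicallySimple_iff [Nontrivial A] {N : Set B}
    (hN : IsHiddenIdeal ι N) (hι : Function.Injective ι) :
    IsTopologicallySimple B ↔ N = {0} ∧ IsMinimalInclusion ι := by
  refine ⟨fun hB ↦ ⟨?_, fun I hI hI0 ↦ ?_⟩, fun ⟨hN0, hmin⟩ J hJ ↦ ?_⟩
  · refine (hB N hN.1).resolve_right fun huniv ↦ ?_
    have hrange : Set.range ι = {0} := by
      simpa only [huniv, Set.univ_inter] using (hN.2 N hN.1).mpr subset_rfl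
    obtain ⟨a, ha⟩ := exists_ne (0 : A)
    exact ha ((map_eq_zero_iff ι hι).mp (hrange.subset (Set.mem_range_self a)))
  · refine (hB _ (isClosedTwoSidedIdeal_closedIdealSpan ι I)).resolve_left fun h0 ↦ hI0 ?_
    exact (subset_zero_of_closedIdealSpan_eq_zero hι h0).antisymm
      (Set.singleton_subset_iff.mpr hI.zero_mem)
  · by_cases hJA : ι ⁻¹' J = {0}
    · have hJA' : J ∩ Set.range ι = {0} := by
        rw [← Set.image_preimage_eq_inter_range, hJA, Set.image_singleton, map_zero]
      exact .inl <| (hN0 ▸ (hN.2 J hJ).mp hJA').antisymm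
        (Set.singleton_subset_iff.mpr hJ.zero_mem)
    · exact .inr <| Set.univ_subset_iff.mp <|
        hmin _ (hJ.preimage ι) hJA ▸ closedIdealSpan_subset hJ subset_rfl

end Inclusions

/-- A completely positive map, viewed as a positive linear map. -/
def CompletelyPositive.toPositiveLinearMap {B C : Type*} [NonUnitalCStarAlgebra B] [PartialOrder B]
    [StarOrderedRing B] [NonUnitalCStarAlgebra C] [PartialOrder C] [StarOrderedRing C]
    {E : B →ₗ[ℂ] C} (hE : CompletelyPositive E) : B →ₚ[ℂ] C :=
  .mk₀ E fun b hb ↦ by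
    obtain ⟨x, rfl⟩ := CStarAlgebra.nonneg_iff_eq_star_mul_self.mp hb
    obtain ⟨y, hy⟩ := hE 1 (Matrix.of fun _ _ ↦ star x * x)
      ⟨Matrix.of fun _ _ ↦ x, by ext i k; simp [Matrix.mul_apply]⟩
    have hEx : E (star x * x) = star (y 0 0) * y 0 0 := by
      simpa [Matrix.mul_apply] using congrFun (congrFun hy 0) 0
    exact hEx ▸ star_mul_self_nonneg (y 0 0)

theorem aperiodic_supportive_hidden_ideal_and_simplicity_general {A B C : Type*}
    [NonUnitalCStarAlgebra A] [PartialOrder A] [StarOrderedRing A] [NonUnitalCStarAlgebra B]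
    [PartialOrder B] [StarOrderedRing B] [NonUnitalCStarAlgebra C] [PartialOrder C]
    [StarOrderedRing C] [Nontrivial A] (ι : A →⋆ₙₐ[ℂ] B) (κ : A →⋆ₙₐ[ℂ] C)
    (hκ : Function.Injective κ) (E : B →ₚ[ℂ] C) (hcontr : ∀ b, ‖E b‖ ≤ ‖b‖)
    (hres : ∀ a, E (ι a) = κ a) (hap : IsAperiodicInclusion ι) (hsupp : IsSupportive κ E) :
    IsHiddenIdeal ι (nullIdeal E) ∧
      (IsTopologicallySimple B ↔ nullIdeal E = {0} ∧ IsMinimalInclusion ι) := by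
  have hι : Function.Injective ι := .of_comp (f := E) ((funext hres : E ∘ ι = κ) ▸ hκ)
  have hN := isHiddenIdeal_nullIdeal hκ hcontr hres hap hsupp
  exact ⟨hN, hN.isTopologicallySimple_iff hι⟩

/-- Let `A ⊆ B` be an aperiodic C*-inclusion (`A` embedded via `ι`)
with a supportive generalised expectation `E : B → Ã ⊇ A` (`A ⊆ Ã` via `κ`), and let
`N_E = {b : E((bc)*(bc)) = 0 for all c}`.  Then (1) `N_E` is the hidden ideal of the
inclusion: it is a closed two-sided ideal and a closed two-sided ideal `J` satisfies
`J ∩ A = {0}` iff `J ⊆ N_E`; and (2) `B` is simple iff `N_E = {0}` and `A` is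
`B`-minimal. -/
theorem aperiodic_supportive_hidden_ideal_and_simplicity
    {A B C : Type*} [NonUnitalCStarAlgebra A] [PartialOrder A] [StarOrderedRing A]
    [NonUnitalCStarAlgebra B] [PartialOrder B] [StarOrderedRing B]
    [NonUnitalCStarAlgebra C] [Nontrivial A]
    (ι : A →⋆ₙₐ[ℂ] B) (κ : A →⋆ₙₐ[ℂ] C) (hι : Isometry ι) (hκ : Isometry κ)
    (E : B →ₗ[ℂ] C)
    (hcp : CompletelyPositive E)
    (hcontr : ∀ b : B, ‖E b‖ ≤ ‖b‖)
    (hres : ∀ a : A, E (ι a) = κ a)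
    (hap : ∀ x : B, ∀ D : Set A, IsHereditarySubalgebra D → ∀ ε : ℝ, 0 < ε →
      ∃ a ∈ D, 0 ≤ a ∧ ‖a‖ = 1 ∧ ∃ y : A, ‖ι a * x * ι a - ι y‖ < ε)
    (hsupp : ∀ b : B, 0 ≤ b → E b ≠ 0 →
      ∃ δ : ℝ, 0 < δ ∧ ∃ D : Set A, IsHereditarySubalgebra D ∧
        ∀ x ∈ D, 0 ≤ x → ‖x‖ = 1 → δ ≤ ‖κ x * E b * κ x‖) :
    (IsClosedTwoSidedIdeal {b : B | ∀ c : B, E (star (b * c) * (b * c)) = 0} ∧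
      ∀ J : Set B, IsClosedTwoSidedIdeal J →
        (J ∩ Set.range ⇑ι = {0} ↔
          J ⊆ {b : B | ∀ c : B, E (star (b * c) * (b * c)) = 0})) ∧
    ((∀ J : Set B, IsClosedTwoSidedIdeal J → J = {0} ∨ J = Set.univ) ↔
      ({b : B | ∀ c : B, E (star (b * c) * (b * c)) = 0} = {0} ∧
        ∀ I : Set A, IsClosedTwoSidedIdeal I → I ≠ {0} →
          closure (Submodule.span ℂ
              {z : B | ∃ b₁ b₂ : B, ∃ i ∈ I, z = b₁ * ι i * b₂} : Set B) = Set.univ)) := by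
  let _ : PartialOrder C := CStarAlgebra.spectralOrder C
  have : StarOrderedRing C := CStarAlgebra.spectralOrderedRing C
  exact aperiodic_supportive_hidden_ideal_and_simplicity_general ι κ hκ.injective
    hcp.toPositiveLinearMap hcontr hres hap hsupp
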